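/- Let M : S → ℂ with M(1) = 1, let L be its admissible cumulants, and let M{z,w}, L{z,w} ∈ A(S) be the moment and cumulant generating functions. Then δM{z,w} = δL^{⋆}{z,w} ⋆ M{z,w} in A(S), where L^{⋆}{z,w} = (L{z,w})_{⋆ M{z,0}} and δf = f − f{z,0}; explicitly, for every word s containing at least one w, M(s)/n(s)! = Σ_{tv=s} δL^{⋆}{z,w}(t) · M{z,w}(v). -/

import Mathlib

/-- The two-letter alphabet `{z, w}`. -/
inductive Letter | z | w
deriving DecidableEq

/-- Words: elements of the free monoid `S = FS({z,w})`. -/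
abbrev Word := List Letter

/-- The convolution product of the semigroup algebra `A(S)`:
`(f ⋆ g)(s) = Σ_{uv = s} f(u) g(v)`. -/
noncomputable def conv (f g : Word → ℂ) (s : Word) : ℂ :=
  ∑ i ∈ Finset.range (s.length + 1), f (s.take i) * g (s.drop i)

/-- `G` is the prefix-accumulating form of the composition `f_{⋆g}` of Definition 6.2:
`G(pre, s) = f(pre ++ s)` if `s` has no `w`, and if `s = z^a w^k rest` with `k ≥ 1`
maximal, the leading `z`-run of `s` is split in all possible ways, each removed part
`z^{a-c}` contributing a factor `g(z^{a-c})`.  Then `f_{⋆g}(s) = G([], s)`. -/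
def IsStarAux (f g : Word → ℂ) (G : Word → Word → ℂ) : Prop :=
  (∀ pre s : Word, Letter.w ∉ s → G pre s = f (pre ++ s)) ∧
    ∀ (pre : Word) (a k : ℕ) (rest : Word), 1 ≤ k → rest.head? ≠ some Letter.w →
      G pre (List.replicate a Letter.z ++ List.replicate k Letter.w ++ rest) =
        ∑ c ∈ Finset.range (a + 1),
          g (List.replicate (a - c) Letter.z) *
            G (pre ++ List.replicate c Letter.z ++ List.replicate k Letter.w) rest

/-- `n(s)! = n₁!n₂!⋯n_p!` for `s = z^{n₁} w^{k₁} z^{n₂} ⋯ w^{k_{p−1}} z^{n_p}`: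
the product of the factorials of the lengths of the maximal `z`-runs of `s`. -/
def nFact (s : Word) : ℕ :=
  ((s.splitOn Letter.w).map fun r => r.length.factorial).prod

/-- `s` is a partition of the index set of a word into blocks; see `IsCumulants`. -/
def letterAt (s : Word) (j : ℕ) : Letter := s.getD j Letter.z

/-- `P` is a partition of the finite set of positions `g ⊆ ℕ` into nonempty blocks. -/
def IsPartitionOn (g : Finset ℕ) (P : Finset (Finset ℕ)) : Prop :=
  (∀ b ∈ P, b.Nonempty) ∧ (P : Set (Finset ℕ)).PairwiseDisjoint id ∧ P.sup id = g

/-- The position `j` is inner with respect to the block `b`. -/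
def InnerPos (j : ℕ) (b : Finset ℕ) : Prop :=
  j ∉ b ∧ ∃ i ∈ b, ∃ k ∈ b, i < j ∧ j < k

/-- A partition is admissible if no block contains a letter `w` that is inner
with respect to another block. -/
def Admissible (s : Word) (P : Finset (Finset ℕ)) : Prop :=
  ∀ b ∈ P, ∀ b' ∈ P, b ≠ b' → ∀ j ∈ b, letterAt s j = Letter.w → ¬ InnerPos j b'

open scoped Classical in
/-- The set `AP(s)` of admissible partitions of the positions `g` of the word `s`. -/
noncomputable def APfin (s : Word) (g : Finset ℕ) : Finset (Finset (Finset ℕ)) :=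
  g.powerset.powerset.filter fun P => IsPartitionOn g P ∧ Admissible s P

/-- The subword of `s` determined by a set of positions `b`. -/
def wordOf (s : Word) (b : Finset ℕ) : Word :=
  (b.sort (· ≤ ·)).map (letterAt s)

/-- `L` is the family of admissible cumulants of the moment function `M`. -/
def IsCumulants (M L : Word → ℂ) : Prop :=
  ∀ s : Word, s ≠ [] →
    M s = ∑ P ∈ APfin s (Finset.range s.length), ∏ b ∈ P, L (wordOf s b)

/-- The moment generating function `M{z,w}(s) = M(s)/n(s)!`. -/
noncomputable def genFun (M : Word → ℂ) (s : Word) : ℂ := M s / (nFact s : ℂ)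

open scoped Classical in
/-- The restriction `f{z,0}` of `f` to `S(z)`, extended by `0`. -/
noncomputable def restrZ (f : Word → ℂ) (s : Word) : ℂ :=
  if Letter.w ∈ s then 0 else f s

open scoped Classical in
/-- `δf = f − f{z,0}`. -/
noncomputable def deltaF (f : Word → ℂ) (s : Word) : ℂ :=
  if Letter.w ∈ s then f s else 0

/-!
In an admissible partition of a word `s` with a `w`, let `b` be the block of the first `w`. It
contains every `w` up to its maximum, so every other block lies in one of the maximal `z`-runs
before the last `w` of `b`, or in the part of `s` after it. Summing over the other blocks therefore
replaces the `j` letters of such a run that are missing from `b` by the moment `M(z^j)`, which is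
the factor `g(z^j)` of `f_{⋆g}`, and the letters not in `b` after its last `w` by a single moment
`M`. In a `z`-run of length `n` there are `n! / (i! j!)` ways to put `i` letters in `b` and leave
out `j`, and dividing by the factorials of the run lengths turns the sum over `b` into the
convolution.
-/

lemma parts_avoid_of_mem {α : Type*} [GeneralizedBooleanAlgebra α] [DecidableEq α] {a b : α}
    (P : Finpartition a) (hb : b ∈ P.parts) : (P.avoid b).parts = P.parts.erase b := by
  have sdiff_eq {d : α} (hd : d ∈ P.parts) (hdb : d ≠ b) : d \ b = d :=
    (P.disjoint hd hb hdb).sdiff_eq_left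
  ext c
  rw [Finpartition.mem_avoid, Finset.mem_erase]
  constructor
  · rintro ⟨d, hd, hdb, rfl⟩
    have hne : d ≠ b := fun h => hdb h.le
    rw [sdiff_eq hd hne]
    exact ⟨hne, hd⟩
  · rintro ⟨hcb, hc⟩
    refine ⟨c, hc, fun hle => ?_, sdiff_eq hc hcb⟩
    exact P.ne_bot hc ((sdiff_eq hc hcb).symm.trans (sdiff_eq_bot_iff.mpr hle))

section PartitionSum

variable {α β R : Type*} [DecidableEq α] [DecidableEq β] [CommSemiring R]

/-- The sum over all set partitions of `h` of the product of the weights `f b` of the blocks. -/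
def partitionSum (f : Finset α → R) (h : Finset α) : R :=
  ∑ P : Finpartition h, ∏ b ∈ P.parts, f b

lemma partitionSum_empty (f : Finset α → R) : partitionSum f ∅ = 1 := by
  have : Unique (Finpartition (∅ : Finset α)) := inferInstanceAs (Unique (Finpartition ⊥))
  rw [partitionSum, Fintype.sum_unique, Finpartition.parts_eq_empty_iff.mpr rfl, Finset.prod_empty]

lemma partitionSum_congr {f f' : Finset α → R} {h : Finset α} (hff' : ∀ b ⊆ h, f b = f' b) :
    partitionSum f h = partitionSum f' h :=
  Finset.sum_congr rfl fun P _ => Finset.prod_congr rfl fun b hb => hff' b (P.subset hb)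

lemma sum_finpartition_of_mem_parts (f : Finset α → R) {h b : Finset α} (hb : b.Nonempty)
    (hbh : b ⊆ h) :
    ∑ P : Finpartition h with b ∈ P.parts, ∏ c ∈ P.parts, f c = f b * partitionSum f (h \ b) := by
  have notMem_parts (Q : Finpartition (h \ b)) : b ∉ Q.parts := fun hbQ =>
    hb.ne_empty (Finset.disjoint_self_iff_empty b |>.mp
      (Finset.disjoint_sdiff.mono_right (Q.subset hbQ)))
  rw [partitionSum, Finset.mul_sum]
  symm
  refine Finset.sum_nbij
    (fun Q => Q.extend hb.ne_empty Finset.sdiff_disjoint (Finset.sdiff_union_of_subset hbh))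
    (fun Q _ => ?_) (fun Q _ Q' _ hQQ' => ?_) (fun P hP => ?_) (fun Q _ => ?_)
  · simp
  · have hparts := congrArg (fun P => P.parts.erase b) hQQ'
    simp only [Finpartition.extend_parts, Finset.erase_insert (notMem_parts _)] at hparts
    exact Finpartition.ext hparts
  · have hbP : b ∈ P.parts := by simpa using hP
    refine ⟨P.avoid b, Finset.mem_coe.mpr (Finset.mem_univ _), Finpartition.ext ?_⟩
    rw [Finpartition.extend_parts, parts_avoid_of_mem P hbP, Finset.insert_erase hbP]
  · rw [Finpartition.extend_parts, Finset.prod_insert (notMem_parts Q)]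

lemma partitionSum_eq_sum_block (f : Finset α → R) {h : Finset α} {i : α} (hi : i ∈ h) :
    partitionSum f h = ∑ b ∈ h.powerset with i ∈ b, f b * partitionSum f (h \ b) := by
  rw [partitionSum, ← Finset.sum_fiberwise_of_maps_to (g := fun P => P.part i)
    (t := {b ∈ h.powerset | i ∈ b}) (by simp [hi])]
  refine Finset.sum_congr rfl fun b hb => ?_
  obtain ⟨hbh, hib⟩ : b ⊆ h ∧ i ∈ b := by simpa using hb
  rw [← sum_finpartition_of_mem_parts f ⟨i, hib⟩ hbh]
  refine Finset.sum_congr (Finset.filter_congr fun P _ => ?_) fun _ _ => rfl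
  exact ⟨fun h => h ▸ P.part_mem.mpr hi, fun h => P.part_eq_of_mem h hib⟩

lemma partitionSum_union {f : Finset α → R} {h₁ h₂ : Finset α} (hdisj : Disjoint h₁ h₂)
    (hf : ∀ b ⊆ h₁ ∪ h₂, (∃ x ∈ b, x ∈ h₁) → (∃ y ∈ b, y ∈ h₂) → f b = 0) :
    partitionSum f (h₁ ∪ h₂) = partitionSum f h₁ * partitionSum f h₂ := by
  induction h₁ using Finset.strongInduction with
  | H h₁ ih =>
  obtain rfl | ⟨i, hi⟩ := h₁.eq_empty_or_nonempty
  · rw [partitionSum_empty, Finset.empty_union, one_mul]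
  rw [partitionSum_eq_sum_block f (Finset.mem_union_left h₂ hi), partitionSum_eq_sum_block f hi,
    Finset.sum_mul]
  symm
  refine Finset.sum_subset_zero_on_sdiff (fun b hb => ?_) (fun b hb => ?_) (fun b hb => ?_)
  · simp only [Finset.mem_filter, Finset.mem_powerset] at hb ⊢
    exact ⟨hb.1.trans Finset.subset_union_left, hb.2⟩
  · simp only [Finset.mem_sdiff, Finset.mem_filter, Finset.mem_powerset, not_and'] at hb
    obtain ⟨⟨hb, hib⟩, hb₁⟩ := hb
    obtain ⟨y, hyb, hy₁⟩ := Finset.not_subset.mp (hb₁ hib)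
    have hy₂ : y ∈ h₂ := (Finset.mem_union.mp (hb hyb)).resolve_left hy₁
    rw [hf b hb ⟨i, hib, hi⟩ ⟨y, hyb, hy₂⟩, zero_mul]
  · simp only [Finset.mem_filter, Finset.mem_powerset] at hb
    obtain ⟨hb, hib⟩ := hb
    have hsdiff : (h₁ ∪ h₂) \ b = h₁ \ b ∪ h₂ := by
      rw [Finset.union_sdiff_distrib, Finset.sdiff_eq_self_of_disjoint (hdisj.mono_left hb).symm]
    rw [hsdiff, ih _ (Finset.sdiff_ssubset hb ⟨i, hib⟩) (hdisj.mono_left Finset.sdiff_subset),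
      mul_assoc]
    rintro c hc ⟨x, hxc, hx⟩
    exact hf c (hc.trans (Finset.union_subset_union_left Finset.sdiff_subset))
      ⟨x, hxc, (Finset.mem_sdiff.mp hx).1⟩

lemma partitionSum_map (f : Finset β → R) (e : α ↪ β) (h : Finset α) :
    partitionSum f (h.map e) = partitionSum (fun b => f (b.map e)) h := by
  induction h using Finset.strongInduction with
  | H h ih =>
  obtain rfl | ⟨i, hi⟩ := h.eq_empty_or_nonempty
  · rw [Finset.map_empty, partitionSum_empty, partitionSum_empty]
  rw [partitionSum_eq_sum_block f (Finset.mem_map_of_mem e hi), partitionSum_eq_sum_block _ hi]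
  symm
  refine Finset.sum_nbij (fun b => b.map e) (fun b hb => ?_)
    (Finset.map_injective e).injOn (fun b hb => ?_) (fun b hb => ?_)
  · simpa using hb
  · simp only [Finset.coe_filter, Finset.mem_powerset, Set.mem_ofPred_eq] at hb
    obtain ⟨c, hc, rfl⟩ := Finset.subset_map_iff.mp hb.1
    exact ⟨c, by simpa [hc] using hb.2, rfl⟩
  · simp only [Finset.mem_filter, Finset.mem_powerset] at hb
    rw [← ih _ (Finset.sdiff_ssubset hb.1 ⟨i, hb.2⟩), Finset.map_sdiff]

end PartitionSum

section Subword

variable {s : Word} {g b A B : Finset ℕ}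

lemma letterAt_eq_getElem {j : ℕ} (hj : j < s.length) : letterAt s j = s[j] := by
  simp [letterAt, hj]

lemma lt_length_of_letterAt_eq_w {j : ℕ} (hj : letterAt s j = .w) : j < s.length := by
  by_contra hle
  rw [letterAt, List.getD_eq_default _ _ (not_lt.mp hle)] at hj
  contradiction

lemma w_mem_iff_exists_letterAt : .w ∈ s ↔ ∃ j, letterAt s j = .w := by
  refine ⟨fun h => ?_, fun ⟨j, hj⟩ => ?_⟩
  · obtain ⟨j, hj, hjw⟩ := List.mem_iff_getElem.mp h
    exact ⟨j, letterAt_eq_getElem hj ▸ hjw⟩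
  · have hlt := lt_length_of_letterAt_eq_w hj
    exact hj ▸ letterAt_eq_getElem hlt ▸ List.getElem_mem hlt

lemma wordOf_empty (s : Word) : wordOf s ∅ = [] := by
  simp [wordOf]

lemma mem_wordOf {x : Letter} : x ∈ wordOf s b ↔ ∃ j ∈ b, letterAt s j = x := by
  simp [wordOf]

lemma length_wordOf (s : Word) (b : Finset ℕ) : (wordOf s b).length = b.card := by
  simp [wordOf]

lemma wordOf_union_of_lt (hAB : ∀ i ∈ A, ∀ j ∈ B, i < j) :
    wordOf s (A ∪ B) = wordOf s A ++ wordOf s B := by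
  have hsort : (A ∪ B).sort = A.sort ++ B.sort := by
    refine (A ∪ B).sortedLT_sort.eq_of_mem_iff (List.Pairwise.sortedLT ?_) (by simp)
    exact List.pairwise_append.mpr ⟨A.sortedLT_sort.pairwise, B.sortedLT_sort.pairwise,
      by simpa using hAB⟩
  rw [wordOf, hsort, List.map_append, wordOf, wordOf]

lemma wordOf_insert_of_lt {n : ℕ} (hb : ∀ i ∈ b, i < n) :
    wordOf s (insert n b) = wordOf s b ++ [letterAt s n] := by
  rw [Finset.insert_eq, Finset.union_comm, wordOf_union_of_lt (by simpa using hb)]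
  simp [wordOf]

lemma wordOf_eq_replicate {x : Letter} (hb : ∀ j ∈ b, letterAt s j = x) :
    wordOf s b = List.replicate b.card x := by
  refine List.eq_replicate_iff.mpr ⟨length_wordOf s b, fun y hy => ?_⟩
  obtain ⟨j, hj, rfl⟩ := mem_wordOf.mp hy
  exact hb j hj

lemma wordOf_Ico_length (s : Word) (n : ℕ) : wordOf s (Finset.Ico n s.length) = s.drop n := by
  have hsort : (Finset.Ico n s.length).sort = List.range' n (s.length - n) :=
    (Finset.sortedLT_sort _).eq_of_mem_iff (List.sortedLT_range' _ _ one_ne_zero) (by simp; lia)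
  rw [wordOf, hsort]
  exact List.ext_getElem (by simp) fun i hi _ => by
    simp [letterAt_eq_getElem (show n + i < s.length by simp at hi; lia)]

lemma wordOf_map {n : ℕ} (s : Word) (e : Fin n ↪o ℕ) (b : Finset (Fin n)) :
    wordOf s (b.map e.toEmbedding) = b.sort.map fun i => letterAt s (e i) := by
  rw [wordOf, ← (e.strictMono.strictMonoOn (b : Set (Fin n))).map_finsetSort (f := e.toEmbedding),
    List.map_map]
  rfl

lemma letterAt_wordOf {n : ℕ} (hn : g.card = n) (i : Fin n) :
    letterAt (wordOf s g) i = letterAt s (g.orderEmbOfFin hn i) := by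
  rw [letterAt_eq_getElem (by simp [length_wordOf, hn])]
  simp [wordOf, Finset.orderEmbOfFin_apply]

end Subword

section BlockWeight

/-- A set of positions is `w`-convex if it contains every position of a letter `w` that lies
between two of its elements. A partition is admissible iff all its blocks are `w`-convex. -/
def WConvex (s : Word) (b : Finset ℕ) : Prop :=
  ∀ j, letterAt s j = .w → ¬ InnerPos j b

lemma WConvex.mem {s : Word} {b : Finset ℕ} (hb : WConvex s b) {i j k : ℕ} (hi : i ∈ b)
    (hk : k ∈ b) (hj : letterAt s j = .w) (hij : i < j) (hjk : j < k) : j ∈ b := by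
  by_contra hjb
  exact hb j hj ⟨hjb, i, hi, k, hk, hij, hjk⟩

lemma admissible_parts_iff {s : Word} (P : Finpartition (Finset.range s.length)) :
    Admissible s P.parts ↔ ∀ b ∈ P.parts, WConvex s b := by
  refine ⟨fun h b hb j hj hinner => ?_, fun h b _ c hc _ j _ hj => h c hc j hj⟩
  obtain ⟨c, hc, hjc⟩ := P.exists_mem (Finset.mem_range.mpr (lt_length_of_letterAt_eq_w hj))
  exact h c hc b hb (fun hcb => hinner.1 (hcb ▸ hjc)) j hjc hj hinner

open scoped Classical in
/-- The cumulant `L` of the subword at a `w`-convex block and `0` at all other blocks, so that the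
sum over admissible partitions becomes a sum over all partitions. -/
noncomputable def blockWeight (L : Word → ℂ) (s : Word) (b : Finset ℕ) : ℂ :=
  if WConvex s b then L (wordOf s b) else 0

lemma isPartitionOn_parts {g : Finset ℕ} (P : Finpartition g) : IsPartitionOn g P.parts :=
  ⟨fun _ hb => P.nonempty_of_mem_parts hb, P.disjoint, P.sup_parts⟩

lemma IsPartitionOn.exists_finpartition {g : Finset ℕ} {P : Finset (Finset ℕ)}
    (hP : IsPartitionOn g P) : ∃ Q : Finpartition g, Q.parts = P :=
  ⟨⟨P, hP.2.1.supIndep, hP.2.2, fun h => (hP.1 _ h).ne_empty rfl⟩, rfl⟩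

lemma sum_APfin_eq_partitionSum (L : Word → ℂ) (s : Word) :
    ∑ P ∈ APfin s (Finset.range s.length), ∏ b ∈ P, L (wordOf s b) =
      partitionSum (blockWeight L s) (Finset.range s.length) := by
  classical
  simp only [partitionSum, blockWeight, Finset.prod_ite_zero, ← admissible_parts_iff]
  rw [← Finset.sum_filter]
  symm
  refine Finset.sum_nbij (·.parts) (fun P hP => ?_) (fun P _ Q _ h => Finpartition.ext h)
    (fun P hP => ?_) fun _ _ => rfl
  · simp only [APfin, Finset.mem_filter, Finset.mem_powerset]
    exact ⟨fun b hb => Finset.mem_powerset.mpr (P.subset hb), isPartitionOn_parts P,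
      (Finset.mem_filter.mp hP).2⟩
  · obtain ⟨hpart, hadm⟩ := (Finset.mem_filter.mp hP).2
    obtain ⟨Q, rfl⟩ := hpart.exists_finpartition
    exact ⟨Q, by simpa using hadm, rfl⟩

section Transport

variable {n : ℕ} {s s' : Word} {e e' : Fin n ↪o ℕ} {b : Finset (Fin n)}

lemma WConvex.map_of_letterAt_eq (he : ∀ i, letterAt s (e i) = letterAt s' (e' i))
    (huniv : WConvex s' (Finset.univ.map e'.toEmbedding)) (hb : WConvex s (b.map e.toEmbedding)) :
    WConvex s' (b.map e'.toEmbedding) := by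
  intro j hj
  rintro ⟨hjb, _, hi, _, hk, hij, hjk⟩
  obtain ⟨m, rfl⟩ : ∃ m, e' m = j := by
    have hsub := Finset.map_subset_map (f := e'.toEmbedding).mpr b.subset_univ
    simpa using huniv.mem (hsub hi) (hsub hk) hj hij hjk
  obtain ⟨i, hib, rfl⟩ := Finset.mem_map.mp hi
  obtain ⟨k, hkb, rfl⟩ := Finset.mem_map.mp hk
  have hm : e m ∈ b.map e.toEmbedding :=
    hb.mem (Finset.mem_map_of_mem _ hib) (Finset.mem_map_of_mem _ hkb) ((he m).trans hj)
      (e.strictMono (e'.lt_iff_lt.mp hij)) (e.strictMono (e'.lt_iff_lt.mp hjk))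
  exact hjb (Finset.mem_map_of_mem _ (by simpa using hm))

open scoped Classical in
lemma blockWeight_map_congr (L : Word → ℂ) (he : ∀ i, letterAt s (e i) = letterAt s' (e' i))
    (huniv : WConvex s (Finset.univ.map e.toEmbedding))
    (huniv' : WConvex s' (Finset.univ.map e'.toEmbedding)) (b : Finset (Fin n)) :
    blockWeight L s (b.map e.toEmbedding) = blockWeight L s' (b.map e'.toEmbedding) := by
  have hconv : WConvex s (b.map e.toEmbedding) ↔ WConvex s' (b.map e'.toEmbedding) :=
    ⟨.map_of_letterAt_eq he huniv', .map_of_letterAt_eq (fun i => (he i).symm) huniv⟩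
  rw [blockWeight, blockWeight, if_congr hconv rfl rfl, wordOf_map, wordOf_map, funext he]

end Transport

lemma wConvex_range (s : Word) (n : ℕ) : WConvex s (Finset.range n) := by
  rintro j _ ⟨hj, _, _, k, hk, _, hjk⟩
  exact hj (Finset.mem_range.mpr (hjk.trans (Finset.mem_range.mp hk)))

variable {M L : Word → ℂ}

lemma IsCumulants.moment_eq_partitionSum (hL : IsCumulants M L) (hM1 : M [] = 1) (s : Word) :
    M s = partitionSum (blockWeight L s) (Finset.range s.length) := by
  obtain rfl | hs := eq_or_ne s []
  · rw [hM1, List.length_nil, Finset.range_zero, partitionSum_empty]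
  · rw [hL s hs, sum_APfin_eq_partitionSum]

lemma IsCumulants.partitionSum_eq_moment (hL : IsCumulants M L) (hM1 : M [] = 1) {s : Word}
    {g : Finset ℕ} (hg : WConvex s g) : partitionSum (blockWeight L s) g = M (wordOf s g) := by
  have hrange : (Finset.univ : Finset (Fin g.card)).map (Fin.valOrderEmb g.card).toEmbedding =
      Finset.range g.card := Fin.map_valEmbedding_univ.trans (Nat.Iio_eq_range _)
  have hmap := g.map_orderEmbOfFin_univ rfl
  rw [hL.moment_eq_partitionSum hM1, length_wordOf, ← hrange, partitionSum_map]
  conv_lhs => rw [← hmap, partitionSum_map]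
  refine partitionSum_congr fun b _ => blockWeight_map_congr L
    (fun i => (letterAt_wordOf rfl i).symm) (hmap.symm ▸ hg) (hrange.symm ▸ wConvex_range _ _) b

end BlockWeight

section LeadingBlock

/-- The possible blocks of the first letter `w` in an admissible partition of `s`: the `w`-convex
sets containing the first `w`. The definition, which avoids naming that letter, says that `b`
contains a `w` and every `w` that precedes one of its elements. -/
def IsLeading (s : Word) (b : Finset ℕ) : Prop :=
  (∃ j ∈ b, letterAt s j = .w) ∧ ∀ j ∈ b, ∀ k < j, letterAt s k = .w → k ∈ b

lemma isLeading_iff {s : Word} {b : Finset ℕ} {i : ℕ} (hi : letterAt s i = .w)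
    (hmin : ∀ k, letterAt s k = .w → i ≤ k) : IsLeading s b ↔ i ∈ b ∧ WConvex s b := by
  constructor
  · rintro ⟨⟨j, hjb, hj⟩, hdown⟩
    refine ⟨?_, fun k hk ⟨hkb, _, _, m, hm, _, hkm⟩ => hkb (hdown m hm k hkm hk)⟩
    obtain rfl | hij := (hmin j hj).eq_or_lt
    · exact hjb
    · exact hdown j hjb i hij hi
  · rintro ⟨hib, hconv⟩
    refine ⟨⟨i, hib, hi⟩, fun j hj k hkj hk => ?_⟩
    obtain rfl | hik := (hmin k hk).eq_or_lt
    · exact hib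
    · exact hconv.mem hib hj hk hik hkj

open scoped Classical in
/-- The contribution to the moment of `s` of the leading blocks `b ∪ c` with `c ⊆ [n, |s|)`, when
the positions in `u` and those of `[n, |s|) \ c` are left to the other blocks. -/
noncomputable def leadingBlockSum (L : Word → ℂ) (s : Word) (b u : Finset ℕ) (n : ℕ) : ℂ :=
  ∑ c ∈ (Finset.Ico n s.length).powerset, if IsLeading s (b ∪ c) then
    L (wordOf s (b ∪ c)) * partitionSum (blockWeight L s) (u ∪ (Finset.Ico n s.length \ c)) else 0

lemma leadingBlockSum_split (L : Word → ℂ) {s : Word} (b u : Finset ℕ) {n : ℕ}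
    (hn : n < s.length) :
    leadingBlockSum L s b u n =
      leadingBlockSum L s (insert n b) u (n + 1) + leadingBlockSum L s b (insert n u) (n + 1) := by
  have hnotMem : n ∉ Finset.Ico (n + 1) s.length := by simp
  rw [leadingBlockSum, ← Finset.insert_Ico_add_one_left_eq_Ico hn,
    Finset.sum_powerset_insert hnotMem, add_comm]
  refine congrArg₂ (· + ·) (Finset.sum_congr rfl fun c _ => ?_)
    (Finset.sum_congr rfl fun c hc => ?_)
  · rw [Finset.union_insert, Finset.insert_union, Finset.insert_sdiff_insert,
      Finset.sdiff_insert_of_notMem hnotMem]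
  · have hnc : n ∉ c := fun h => hnotMem (Finset.mem_powerset.mp hc h)
    rw [Finset.insert_sdiff_of_notMem _ hnc, Finset.union_insert, Finset.insert_union]

/-- The state of a left-to-right scan of `s` for its leading block, after `n` letters: `b` holds the
positions chosen so far and `u` the positions rejected since the last `w`. Every `w` read so far has
been chosen, since rejecting one ends the leading block. -/
structure ScanState (s : Word) (n : ℕ) (b u : Finset ℕ) : Prop where
  chosen_lt : ∀ i ∈ b, i < n
  rejected_lt : ∀ i ∈ u, i < n
  mem_of_w : ∀ j < n, letterAt s j = .w → j ∈ b
  lt_of_w : ∀ j < n, letterAt s j = .w → ∀ i ∈ u, j < i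

namespace ScanState

variable {M L : Word → ℂ} {s : Word} {n : ℕ} {b u : Finset ℕ}

lemma nil (s : Word) : ScanState s 0 ∅ ∅ := by
  constructor <;> simp

lemma choose (h : ScanState s n b u) (hn : letterAt s n = .z) :
    ScanState s (n + 1) (insert n b) u where
  chosen_lt := by simpa using fun i hi => (h.chosen_lt i hi).le
  rejected_lt i hi := (h.rejected_lt i hi).trans n.lt_succ_self
  mem_of_w j hj hjw := by
    have hjn : j ≠ n := by rintro rfl; simp [hn] at hjw
    exact Finset.mem_insert_of_mem (h.mem_of_w j (by lia) hjw)
  lt_of_w j hj hjw := by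
    have hjn : j ≠ n := by rintro rfl; simp [hn] at hjw
    exact h.lt_of_w j (by lia) hjw

lemma reject (h : ScanState s n b u) (hn : letterAt s n = .z) :
    ScanState s (n + 1) b (insert n u) where
  chosen_lt i hi := (h.chosen_lt i hi).trans n.lt_succ_self
  rejected_lt := by simpa using fun i hi => (h.rejected_lt i hi).le
  mem_of_w j hj hjw := by
    have hjn : j ≠ n := by rintro rfl; simp [hn] at hjw
    exact h.mem_of_w j (by lia) hjw
  lt_of_w j hj hjw := by
    have hjn : j < n := lt_of_le_of_ne (by lia) (by rintro rfl; simp [hn] at hjw)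
    simpa [hjn] using h.lt_of_w j hjn hjw

lemma choose_w (h : ScanState s n b u) : ScanState s (n + 1) (insert n b) ∅ where
  chosen_lt := by simpa using fun i hi => (h.chosen_lt i hi).le
  rejected_lt := by simp
  mem_of_w j hj hjw := by
    obtain rfl | hjn := (Nat.lt_succ_iff.mp hj).eq_or_lt
    · exact Finset.mem_insert_self _ _
    · exact Finset.mem_insert_of_mem (h.mem_of_w j hjn hjw)
  lt_of_w := by simp

lemma wConvex_rejected (h : ScanState s n b u) : WConvex s u := by
  rintro j hj ⟨_, i, hi, k, hk, hij, hjk⟩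
  exact (h.lt_of_w j (hjk.trans (h.rejected_lt k hk)) hj i hi).not_gt hij

lemma wConvex_rejected_union (h : ScanState s n b u) :
    WConvex s (u ∪ Finset.Ico n s.length) := by
  rintro j hj ⟨hjb, i, hi, -, -, hij, -⟩
  have hjs := lt_length_of_letterAt_eq_w hj
  have hjn : j < n := by
    by_contra hnj
    exact hjb (Finset.mem_union_right _ (Finset.mem_Ico.mpr ⟨not_lt.mp hnj, hjs⟩))
  obtain hi | hi := Finset.mem_union.mp hi
  · exact (h.lt_of_w j hjn hj i hi).not_gt hij
  · exact (hjn.trans_le (Finset.mem_Ico.mp hi).1).not_gt hij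

lemma wordOf_rejected (h : ScanState s n b u) : wordOf s u = List.replicate u.card .z := by
  refine wordOf_eq_replicate fun j hj => ?_
  cases hletter : letterAt s j
  · rfl
  · exact absurd (h.lt_of_w j (h.rejected_lt j hj) hletter j hj) (lt_irrefl j)

lemma isLeading_iff (h : ScanState s n b u) : IsLeading s b ↔ .w ∈ wordOf s b := by
  rw [mem_wordOf]
  exact and_iff_left fun j hj k hkj hk => h.mem_of_w k (hkj.trans (h.chosen_lt j hj)) hk

open scoped Classical in
lemma closed_term (h : ScanState s n b u) (hL : IsCumulants M L) (hM1 : M [] = 1) :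
    (if IsLeading s b then
        L (wordOf s b) * partitionSum (blockWeight L s) (u ∪ Finset.Ico n s.length) else 0) =
      deltaF L (wordOf s b) * M (List.replicate u.card .z ++ s.drop n) := by
  have hword : wordOf s (u ∪ Finset.Ico n s.length) = List.replicate u.card .z ++ s.drop n := by
    rw [wordOf_union_of_lt fun i hi j hj => (h.rejected_lt i hi).trans_le (Finset.mem_Ico.mp hj).1,
      h.wordOf_rejected, wordOf_Ico_length]
  rw [hL.partitionSum_eq_moment hM1 h.wConvex_rejected_union, hword, deltaF, ite_zero_mul,
    if_congr h.isLeading_iff rfl rfl]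

lemma leadingBlockSum_length (h : ScanState s s.length b u) (hL : IsCumulants M L)
    (hM1 : M [] = 1) :
    leadingBlockSum L s b u s.length = deltaF L (wordOf s b) * M (List.replicate u.card .z) := by
  rw [leadingBlockSum, Finset.Ico_self, Finset.powerset_empty, Finset.sum_singleton,
    Finset.sdiff_empty, Finset.union_empty b]
  simpa using h.closed_term hL hM1

lemma leadingBlockSum_choose_w (h : ScanState s n b u) (hn : letterAt s n = .w)
    (hL : IsCumulants M L) (hM1 : M [] = 1) :
    leadingBlockSum L s (insert n b) u (n + 1) =
      M (List.replicate u.card .z) * leadingBlockSum L s (insert n b) ∅ (n + 1) := by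
  rw [← h.wordOf_rejected, ← hL.partitionSum_eq_moment hM1 h.wConvex_rejected, leadingBlockSum,
    leadingBlockSum, Finset.mul_sum]
  refine Finset.sum_congr rfl fun c _ => ?_
  have lt_of_mem {y : ℕ} (hy : y ∈ Finset.Ico (n + 1) s.length \ c) : n < y :=
    (Finset.mem_Ico.mp (Finset.mem_sdiff.mp hy).1).1
  rw [partitionSum_union, Finset.empty_union, mul_ite_zero, mul_left_comm]
  · exact Finset.disjoint_left.mpr fun i hi hi' => (h.rejected_lt i hi).not_gt (lt_of_mem hi')
  · rintro d hd ⟨x, hxd, hx⟩ ⟨y, hyd, hy⟩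
    refine if_neg fun hconv => ?_
    have hnd : n ∈ d := hconv.mem hxd hyd hn (h.rejected_lt x hx) (lt_of_mem hy)
    obtain hnu | hnc := Finset.mem_union.mp (hd hnd)
    · exact (h.rejected_lt n hnu).false
    · exact (lt_of_mem hnc).false

lemma leadingBlockSum_reject_w (h : ScanState s n b u) (hn : letterAt s n = .w)
    (hL : IsCumulants M L) (hM1 : M [] = 1) :
    leadingBlockSum L s b (insert n u) (n + 1) =
      deltaF L (wordOf s b) * M (List.replicate u.card .z ++ s.drop n) := by
  rw [leadingBlockSum, Finset.sum_eq_single_of_mem ∅ (Finset.empty_mem_powerset _)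
    fun c hc hne => if_neg fun hlead => ?_]
  · rw [← h.closed_term hL hM1, Finset.union_empty, Finset.sdiff_empty, Finset.insert_union,
      ← Finset.union_insert, Finset.insert_Ico_add_one_left_eq_Ico (lt_length_of_letterAt_eq_w hn)]
  · obtain ⟨j, hj⟩ := Finset.nonempty_iff_ne_empty.mpr hne
    have lt_of_mem {i : ℕ} (hi : i ∈ c) : n < i :=
      (Finset.mem_Ico.mp (Finset.mem_powerset.mp hc hi)).1
    obtain hnb | hnc := Finset.mem_union.mp
      (hlead.2 j (Finset.mem_union_right _ hj) n (lt_of_mem hj) hn)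
    · exact (h.chosen_lt n hnb).false
    · exact (lt_of_mem hnc).false

end ScanState

/-- The sum over the leading blocks of a word as a recursion on the letters still to be scanned; `v`
is the part of the block read so far and `q` the number of letters `z` rejected since the last `w`.
Each `w` either joins the block, in which case the rejected letters split off as a moment, or is
rejected, in which case it ends the block. -/
noncomputable def leadingBlockRec (M L : Word → ℂ) : Word → Word → ℕ → ℂ
  | [], v, q => deltaF L v * M (List.replicate q .z)
  | .z :: s, v, q => leadingBlockRec M L s (v ++ [.z]) q + leadingBlockRec M L s v (q + 1)
  | .w :: s, v, q =>
      M (List.replicate q .z) * leadingBlockRec M L s (v ++ [.w]) 0 +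
        deltaF L v * M (List.replicate q .z ++ .w :: s)

variable {M L : Word → ℂ}

lemma ScanState.leadingBlockSum_eq_rec (hL : IsCumulants M L) (hM1 : M [] = 1) {s r : Word} {n : ℕ}
    {b u : Finset ℕ} (h : ScanState s n b u) (hns : n ≤ s.length) (hr : s.drop n = r) :
    leadingBlockSum L s b u n = leadingBlockRec M L r (wordOf s b) u.card := by
  induction r generalizing n b u with
  | nil =>
    obtain rfl : n = s.length := hns.antisymm (List.drop_eq_nil_iff.mp hr)
    rw [h.leadingBlockSum_length hL hM1, leadingBlockRec]
  | cons x r ih =>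
    have hn : n < s.length := by
      by_contra hle
      simp [List.drop_of_length_le (not_lt.mp hle)] at hr
    obtain ⟨hx, hr'⟩ := List.cons.inj ((List.drop_eq_getElem_cons hn).symm.trans hr)
    rw [← letterAt_eq_getElem hn] at hx
    have hnu : n ∉ u := fun hnu => (h.rejected_lt n hnu).false
    cases x with
    | z =>
      rw [leadingBlockSum_split L b u hn, ih (h.choose hx) hn hr', ih (h.reject hx) hn hr',
        wordOf_insert_of_lt h.chosen_lt, Finset.card_insert_of_notMem hnu, hx, leadingBlockRec]
    | w =>
      rw [leadingBlockSum_split L b u hn, h.leadingBlockSum_choose_w hx hL hM1,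
        ih h.choose_w hn hr', h.leadingBlockSum_reject_w hx hL hM1,
        wordOf_insert_of_lt h.chosen_lt, Finset.card_empty, hx, hr, leadingBlockRec]

open scoped Classical in
lemma IsCumulants.deltaF_moment_eq_leadingBlockSum (hL : IsCumulants M L) (hM1 : M [] = 1)
    (s : Word) : deltaF M s = leadingBlockSum L s ∅ ∅ 0 := by
  simp only [leadingBlockSum, Finset.empty_union, ← Finset.range_eq_Ico]
  by_cases hw : .w ∈ s
  · have hex := w_mem_iff_exists_letterAt.mp hw
    have hi := Nat.find_spec hex
    rw [deltaF, if_pos hw, hL.moment_eq_partitionSum hM1,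
      partitionSum_eq_sum_block _ (Finset.mem_range.mpr (lt_length_of_letterAt_eq_w hi)),
      Finset.sum_filter]
    refine Finset.sum_congr rfl fun c _ => ?_
    rw [blockWeight, ite_zero_mul, ← ite_and,
      if_congr (isLeading_iff hi fun k => Nat.find_min' hex) rfl rfl]
  · rw [deltaF, if_neg hw, Finset.sum_eq_zero]
    rintro c -
    exact if_neg fun hlead => hw (w_mem_iff_exists_letterAt.mpr (hlead.1.imp fun j hj => hj.2))

theorem IsCumulants.deltaF_moment_eq_leadingBlockRec (hL : IsCumulants M L) (hM1 : M [] = 1)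
    (s : Word) : deltaF M s = leadingBlockRec M L s [] 0 := by
  rw [hL.deltaF_moment_eq_leadingBlockSum hM1,
    (ScanState.nil s).leadingBlockSum_eq_rec hL hM1 s.length.zero_le s.drop_zero, wordOf_empty,
    Finset.card_empty]

end LeadingBlock

lemma Word.induction_on_z_runs {P : Word → Prop} (hz : ∀ a, P (List.replicate a .z))
    (hw : ∀ a s, P s → P (List.replicate a .z ++ .w :: s)) (s : Word) : P s := by
  suffices h : ∀ a, P (List.replicate a .z ++ s) from h 0
  induction s with
  | nil => simpa using hz
  | cons x s ih =>
    cases x with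
    | z => exact fun a => by simpa [List.replicate_succ'] using ih (a + 1)
    | w => exact fun a => hw a s (ih 0)

lemma Word.exists_eq_replicate_w_append (s : Word) :
    ∃ k r, r.head? ≠ some .w ∧ s = List.replicate k .w ++ r := by
  induction s with
  | nil => exact ⟨0, [], by simp⟩
  | cons x s ih =>
    cases x with
    | z => exact ⟨0, .z :: s, by simp⟩
    | w =>
      obtain ⟨k, r, hr, rfl⟩ := ih
      exact ⟨k + 1, r, hr, rfl⟩

section ZRunFactorial

lemma nFact_nil : nFact [] = 1 := by
  simp [nFact]

lemma nFact_replicate_z (a : ℕ) : nFact (List.replicate a .z) = a.factorial := by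
  simp [nFact, List.splitOn_eq_singleton (a := Letter.w) (xs := List.replicate a .z)]

lemma nFact_append_w_cons (s t : Word) : nFact (s ++ .w :: t) = nFact s * nFact t := by
  rw [nFact, List.splitOn_append_cons_of_beq s t (beq_self_eq_true _), List.map_append,
    List.prod_append, nFact, nFact]

lemma nFact_append_of_head?_ne (s : Word) {t : Word} (ht : t.head? ≠ some .z) :
    nFact (s ++ t) = nFact s * nFact t := by
  rcases t with - | ⟨_ | _, t⟩
  · simp [nFact_nil]
  · simp at ht
  · rw [nFact_append_w_cons, ← List.nil_append (.w :: t), nFact_append_w_cons, nFact_nil, one_mul]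

lemma nFact_append_of_getLast?_ne {s : Word} (t : Word) (hs : s.getLast? ≠ some .z) :
    nFact (s ++ t) = nFact s * nFact t := by
  obtain rfl | ⟨s, x, rfl⟩ := s.eq_nil_or_concat
  · simp [nFact_nil]
  · obtain rfl : x = .w := by cases x <;> simp_all
    rw [List.concat_eq_append, List.append_assoc, List.singleton_append, nFact_append_w_cons,
      nFact_append_w_cons, nFact_nil, mul_one]

lemma deltaF_genFun (M : Word → ℂ) (s : Word) : deltaF (genFun M) s = deltaF M s / nFact s := by
  rw [deltaF, deltaF, genFun, ite_div, zero_div]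

end ZRunFactorial

section Convolution

open Finset.HasAntidiagonal (antidiagonal)

variable (f g : Word → ℂ) (x y : Letter) (s : Word)

lemma conv_nil : conv f g [] = f [] * g [] := by
  simp [conv]

lemma conv_cons : conv f g (x :: s) = f [] * g (x :: s) + conv (fun t => f (x :: t)) g s := by
  rw [conv, List.length_cons, Finset.sum_range_succ', add_comm]
  rfl

lemma conv_replicate (a : ℕ) :
    conv f g (List.replicate a x) =
      ∑ ij ∈ antidiagonal a, f (List.replicate ij.1 x) * g (List.replicate ij.2 x) := by
  induction a generalizing f with
  | zero => simp [conv_nil]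
  | succ a ih =>
    rw [List.replicate_succ, conv_cons, ih, Finset.Nat.sum_antidiagonal_succ]
    rfl

lemma conv_replicate_append_cons (a : ℕ) :
    conv f g (List.replicate a x ++ y :: s) =
      ∑ ij ∈ antidiagonal a, f (List.replicate ij.1 x) * g (List.replicate ij.2 x ++ y :: s) +
        conv (fun t => f (List.replicate a x ++ y :: t)) g s := by
  induction a generalizing f with
  | zero => simp [conv_cons]
  | succ a ih =>
    rw [List.replicate_succ, List.cons_append, conv_cons, ih, Finset.Nat.sum_antidiagonal_succ,
      add_assoc]
    rfl

lemma conv_sum_mul {ι : Type*} (I : Finset ι) (c : ι → ℂ) (F : ι → Word → ℂ) :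
    conv (fun t => ∑ i ∈ I, c i * F i t) g s = ∑ i ∈ I, c i * conv (F i) g s := by
  simp only [conv, Finset.sum_mul, Finset.mul_sum, mul_assoc]
  exact Finset.sum_comm

end Convolution

section Star

open Finset.HasAntidiagonal (antidiagonal)

variable {f g : Word → ℂ} {G : Word → Word → ℂ}

lemma IsStarAux.replicate_w_append (hG : IsStarAux f g G) (hg : g [] = 1) (v : Word) (k : ℕ)
    {r : Word} (hr : r.head? ≠ some .w) :
    G v (List.replicate k .w ++ r) = G (v ++ List.replicate k .w) r := by
  obtain rfl | hk := k.eq_zero_or_pos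
  · simp
  · simpa [hg] using hG.2 v 0 k r hk hr

lemma IsStarAux.z_run_append_w_cons (hG : IsStarAux f g G) (hg : g [] = 1) (v : Word) (a : ℕ)
    (s : Word) :
    G v (List.replicate a .z ++ .w :: s) =
      ∑ ij ∈ antidiagonal a,
        g (List.replicate ij.2 .z) * G (v ++ List.replicate ij.1 .z ++ [.w]) s := by
  obtain ⟨k, r, hr, rfl⟩ := s.exists_eq_replicate_w_append
  simp only [hG.replicate_w_append hg _ k hr]
  rw [Finset.Nat.sum_antidiagonal_eq_sum_range_succ fun i j =>
    g (List.replicate j Letter.z) *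
      G (v ++ List.replicate i Letter.z ++ [Letter.w] ++ List.replicate k Letter.w) r]
  simpa [List.replicate_succ] using hG.2 v a (k + 1) r k.succ_pos hr

open scoped Classical in
/-- `δ f_{⋆g}` on a word `t` with a fixed prefix `v` in front of it whose `z`-runs are no longer
split, where `G` is the accumulating form of `f_{⋆g}`; at `v = []` this is `δ f_{⋆g}` itself. -/
noncomputable def deltaStar (G : Word → Word → ℂ) (v t : Word) : ℂ :=
  if .w ∈ v ++ t then G v t else 0

lemma IsStarAux.deltaStar_replicate_z (hG : IsStarAux f g G) (v : Word) (a : ℕ) :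
    deltaStar G v (List.replicate a .z) = deltaF f (v ++ List.replicate a .z) := by
  rw [deltaStar, deltaF, hG.1 v _ (by simp)]

lemma IsStarAux.deltaStar_z_run_append_w_cons (hG : IsStarAux f g G) (hg : g [] = 1) (v : Word)
    (a : ℕ) (s : Word) :
    deltaStar G v (List.replicate a .z ++ .w :: s) =
      ∑ ij ∈ antidiagonal a,
        g (List.replicate ij.2 .z) * deltaStar G (v ++ List.replicate ij.1 .z ++ [.w]) s := by
  simp [deltaStar, hG.z_run_append_w_cons hg]

end Star

section GeneratingFunctions

open Finset.HasAntidiagonal (antidiagonal mem_antidiagonal)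

variable {M L : Word → ℂ}

lemma leadingBlockRec_replicate_append (M L : Word → ℂ) (a : ℕ) (r v : Word) (q : ℕ) :
    leadingBlockRec M L (List.replicate a .z ++ r) v q =
      ∑ ij ∈ antidiagonal a,
        (a.choose ij.1 : ℂ) * leadingBlockRec M L r (v ++ List.replicate ij.1 .z) (q + ij.2) := by
  induction a generalizing v q with
  | zero => simp
  | succ a ih =>
    rw [Finset.sum_antidiagonal_choose_succ_mul
        fun i j => leadingBlockRec M L r (v ++ List.replicate i Letter.z) (q + j),
      List.replicate_succ, List.cons_append, leadingBlockRec, ih, ih, add_comm]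
    refine congrArg₂ (· + ·) (Finset.sum_congr rfl fun ij _ => ?_)
      (Finset.sum_congr rfl fun ij hij => ?_)
    · rw [add_right_comm, add_assoc]
    · rw [Nat.choose_symm_of_eq_add (mem_antidiagonal.mp hij).symm, List.append_assoc,
        List.singleton_append, ← List.replicate_succ]

lemma leadingBlockRec_div_nFact (M L : Word → ℂ) (a : ℕ) {v r : Word} (hv : v.getLast? ≠ some .z)
    (hr : r.head? ≠ some .z) :
    leadingBlockRec M L (List.replicate a .z ++ r) v 0 / nFact (v ++ (List.replicate a .z ++ r)) =
      ∑ ij ∈ antidiagonal a,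
        leadingBlockRec M L r (v ++ List.replicate ij.1 .z) ij.2 /
          (nFact (v ++ List.replicate ij.1 .z) * nFact (List.replicate ij.2 .z ++ r)) := by
  rw [leadingBlockRec_replicate_append, Finset.sum_div]
  refine Finset.sum_congr rfl fun ⟨i, j⟩ hij => ?_
  obtain rfl := mem_antidiagonal.mp hij
  have factorial_ne_zero (k : ℕ) : (k.factorial : ℂ) ≠ 0 := mod_cast k.factorial_ne_zero
  simp only [nFact_append_of_getLast?_ne _ hv, nFact_append_of_head?_ne _ hr, nFact_replicate_z,
    Nat.cast_add_choose, Nat.cast_mul, zero_add]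
  field_simp [factorial_ne_zero]

theorem leadingBlockRec_div_nFact_eq_conv {Lgen : Word → ℂ} {G : Word → Word → ℂ} (hM1 : M [] = 1)
    (hLgen : ∀ s ≠ [], Lgen s = genFun L s) (hG : IsStarAux Lgen (restrZ (genFun M)) G)
    (s : Word) {v : Word} (hv : v.getLast? ≠ some .z) :
    leadingBlockRec M L s v 0 / nFact (v ++ s) = conv (deltaStar G v) (genFun M) s := by
  have deltaF_Lgen (t : Word) : deltaF Lgen t = deltaF L t / nFact t := by
    rw [← deltaF_genFun, deltaF, deltaF]
    exact if_ctx_congr Iff.rfl (fun hw => hLgen t (List.ne_nil_of_mem hw)) fun _ => rfl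
  have restrZ_z_run (j : ℕ) : restrZ (genFun M) (List.replicate j .z) =
      M (List.replicate j .z) / j.factorial := by
    simp [restrZ, genFun, nFact_replicate_z]
  have restrZ_nil : restrZ (genFun M) [] = 1 := by simpa [hM1] using restrZ_z_run 0
  induction s using Word.induction_on_z_runs generalizing v with
  | hz a =>
    rw [← List.append_nil (List.replicate a Letter.z), leadingBlockRec_div_nFact M L a hv (by simp),
      List.append_nil, conv_replicate]
    refine Finset.sum_congr rfl fun ⟨i, j⟩ _ => ?_
    rw [hG.deltaStar_replicate_z, deltaF_Lgen, genFun, leadingBlockRec, List.append_nil,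
      mul_div_mul_comm]
  | hw a s ih =>
    rw [leadingBlockRec_div_nFact M L a hv (by simp), conv_replicate_append_cons]
    simp only [hG.deltaStar_z_run_append_w_cons restrZ_nil]
    rw [conv_sum_mul, ← Finset.sum_add_distrib]
    refine Finset.sum_congr rfl fun ⟨i, j⟩ _ => ?_
    rw [← ih (by simp), hG.deltaStar_replicate_z, deltaF_Lgen, restrZ_z_run, leadingBlockRec,
      add_div, mul_div_mul_comm, mul_div_mul_comm, genFun, add_comm]
    simp only [nFact_append_w_cons, nFact_append_of_getLast?_ne (s := _ ++ [Letter.w]) s (by simp),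
      nFact_nil, nFact_replicate_z]
    push_cast
    ring

end GeneratingFunctions

/-- `δM{z,w} = δL^⋆{z,w} ⋆ M{z,w}` in `A(S)`, where
`L^⋆{z,w} = (L{z,w})_{⋆ M{z,0}}`.  Explicitly, for every word `s` containing at
least one `w`, `M(s)/n(s)! = Σ_{tv=s} δL^⋆{z,w}(t) · M{z,w}(v)`. -/
theorem delta_moment_eq_deltaLstar_conv_moment (M L : Word → ℂ)
    (hM1 : M [] = 1) (hL : IsCumulants M L)
    (Lgen : Word → ℂ) (hLgen : Lgen [] = 0)
    (hLgen' : ∀ s : Word, s ≠ [] → Lgen s = L s / (nFact s : ℂ))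
    (G : Word → Word → ℂ) (hG : IsStarAux Lgen (restrZ (genFun M)) G) :
    ∀ s : Word, deltaF (genFun M) s = conv (deltaF fun t => G [] t) (genFun M) s := by
  intro s
  calc deltaF (genFun M) s
      = deltaF M s / nFact s := deltaF_genFun M s
    _ = leadingBlockRec M L s [] 0 / nFact s := by rw [hL.deltaF_moment_eq_leadingBlockRec hM1]
    _ = conv (deltaStar G []) (genFun M) s :=
      leadingBlockRec_div_nFact_eq_conv hM1 hLgen' hG s (by simp)
    _ = conv (deltaF fun t => G [] t) (genFun M) s := rfl
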